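/- arXiv:1005.3579 — 2 statements merged into one kernel-verified Lean document; each statement's English description precedes it below -/
import Mathlib

section
/- Fix matrices X ∈ ℝ^{N×J}, Y ∈ ℝ^{N×K}, C ∈ ℝ^{K×M} and μ > 0, and define f̃ : ℝ^{J×K} → ℝ by f̃(B) = (1/2)‖Y − X B‖_F² + f_μ(B), where f_μ(B) = sup{⟨A, B C⟩ − (μ/2)‖A‖_F² : ‖A‖_∞ ≤ 1}. Then f̃ is differentiable at every B (with respect to the Frobenius inner product structure), with gradient ∇f̃(B) = Xᵀ(X B − Y) + S((B C)/μ) Cᵀ, where S is the entrywise shrinkage operator S(x) = max(−1, min(1, x)). -/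
/-!
The supremum defining `f_μ` separates over the entries of `A`: for each entry `u` of `B C` it is the
supremum of `a u - (μ/2) a²` over `|a| ≤ 1`, attained at the projection `S(u/μ)` of the
unconstrained maximiser `u/μ` onto `[-1, 1]`. Hence `f_μ(B) = ∑ φ((BC)_{jm})` for a scalar function
`φ` (`sSup_eq_sum_scalarSmooth`).

As a supremum of affine functions of `u` with slopes `a`, `φ` satisfies
`φ(u) + S(u/μ)(v - u) ≤ φ(v) ≤ φ(u) + S(v/μ)(v - u)`, so continuity of `S` gives `φ'(u) = S(u/μ)`
(`hasDerivAt_scalarSmooth`). The gradient formula then follows from the chain rule through the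
linear entries of `BC` and `XB`, and from moving `C` and `X` across the Frobenius inner product.
-/

open Finset Matrix

attribute [local instance] Matrix.normedAddCommGroup Matrix.normedSpace

/-- The shrinkage operator `S(x) = max(-1, min(1, x))`. -/
noncomputable def shrink (x : ℝ) : ℝ := max (-1) (min 1 x)

lemma abs_shrink_le (x : ℝ) : |shrink x| ≤ 1 :=
  abs_le.2 ⟨le_max_left _ _, max_le (by norm_num) (min_le_left _ _)⟩

lemma continuous_shrink : Continuous shrink := by
  unfold shrink
  fun_prop

/-- The value of the scalar problem `sup {a u - (μ/2) a² : |a| ≤ 1}`, encoded as the objective at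
its maximiser `S(u/μ)`; the two agree by `le_scalarSmooth` and `abs_shrink_le`. -/
noncomputable def scalarSmooth (μ u : ℝ) : ℝ :=
  shrink (u / μ) * u - μ / 2 * shrink (u / μ) ^ 2

lemma le_scalarSmooth {μ : ℝ} (hμ : 0 < μ) (u : ℝ) {a : ℝ} (ha : |a| ≤ 1) :
    a * u - μ / 2 * a ^ 2 ≤ scalarSmooth μ u := by
  obtain ⟨t, rfl⟩ : ∃ t, u = μ * t := ⟨u / μ, by field_simp⟩
  obtain ⟨h1, h2⟩ := abs_le.1 ha
  have ht : μ * t / μ = t := by field_simp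
  rw [scalarSmooth, ht]
  -- Completing the square reduces the claim to `|t - S(t)| ≤ |t - a|`.
  suffices h : 0 ≤ (t - a) ^ 2 - (t - shrink t) ^ 2 by nlinarith [mul_nonneg hμ.le h]
  unfold shrink
  rcases le_total t 1 with h | h
  · rw [min_eq_right h]
    rcases le_total t (-1) with h' | h'
    · rw [max_eq_left h']; nlinarith
    · rw [max_eq_right h']; nlinarith [sq_nonneg (t - a)]
  · rw [min_eq_left h, max_eq_right (by norm_num)]; nlinarith

lemma hasDerivAt_scalarSmooth {μ : ℝ} (hμ : 0 < μ) (u : ℝ) :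
    HasDerivAt (scalarSmooth μ) (shrink (u / μ)) u := by
  rw [hasDerivAt_iff_isLittleO, Asymptotics.isLittleO_iff]
  intro c hc
  have hcont : Continuous fun v : ℝ => shrink (v / μ) :=
    continuous_shrink.comp (continuous_id.div_const μ)
  have hev := Metric.tendsto_nhds.1 (hcont.tendsto u) c hc
  filter_upwards [hev] with v hv
  rw [Real.dist_eq] at hv
  -- Each maximiser is a competitor in the other point's problem.
  have h1 := le_scalarSmooth hμ v (abs_shrink_le (u / μ))
  have h2 := le_scalarSmooth hμ u (abs_shrink_le (v / μ))
  have key : |scalarSmooth μ v - scalarSmooth μ u - (v - u) * shrink (u / μ)|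
      ≤ |(shrink (v / μ) - shrink (u / μ)) * (v - u)| := by
    rw [abs_of_nonneg (by rw [scalarSmooth.eq_1 μ u]; linarith)]
    refine le_trans ?_ (le_abs_self _)
    rw [scalarSmooth.eq_1 μ v]
    linarith
  rw [abs_mul] at key
  simp only [Real.norm_eq_abs, smul_eq_mul]
  exact key.trans (by gcongr)

/-- The matrix supremum defining `f_μ` splits into scalar ones, with `D` standing for `B C`. -/
lemma sSup_eq_sum_scalarSmooth {J M : Type*} [Fintype J] [Fintype M] {μ : ℝ} (hμ : 0 < μ)
    (D : Matrix J M ℝ) :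
    sSup {x : ℝ | ∃ A : Matrix J M ℝ, (∀ j m, |A j m| ≤ 1) ∧
      x = (∑ j, ∑ m, A j m * D j m) - μ / 2 * (∑ j, ∑ m, (A j m) ^ 2)}
      = ∑ j, ∑ m, scalarSmooth μ (D j m) := by
  have split (A : Matrix J M ℝ) :
      (∑ j, ∑ m, A j m * D j m) - μ / 2 * (∑ j, ∑ m, (A j m) ^ 2)
        = ∑ j, ∑ m, (A j m * D j m - μ / 2 * (A j m) ^ 2) := by
    simp only [Finset.sum_sub_distrib, Finset.mul_sum]
  refine IsGreatest.csSup_eq ⟨?_, ?_⟩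
  · refine ⟨Matrix.of fun j m => shrink (D j m / μ), fun j m => abs_shrink_le _, ?_⟩
    rw [split]
    rfl
  · rintro x ⟨A, hA, rfl⟩
    rw [split]
    exact Finset.sum_le_sum fun j _ => Finset.sum_le_sum fun m _ => le_scalarSmooth hμ _ (hA j m)

lemma sum_mul_mul_right {J K M : Type*} [Fintype J] [Fintype K] [Fintype M]
    (S : Matrix J M ℝ) (C : Matrix K M ℝ) (Δ : Matrix J K ℝ) :
    ∑ j, ∑ m, S j m * (Δ * C) j m = ∑ j, ∑ k, (S * Cᵀ) j k * Δ j k := by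
  simp only [Matrix.mul_apply, Matrix.transpose_apply, Finset.mul_sum, Finset.sum_mul]
  refine Finset.sum_congr rfl fun j _ => ?_
  rw [Finset.sum_comm]
  exact Finset.sum_congr rfl fun k _ => Finset.sum_congr rfl fun m _ => by ring

lemma sum_mul_mul_left {N J K : Type*} [Fintype N] [Fintype J] [Fintype K]
    (R : Matrix N K ℝ) (X : Matrix N J ℝ) (Δ : Matrix J K ℝ) :
    ∑ n, ∑ k, R n k * (X * Δ) n k = ∑ j, ∑ k, (Xᵀ * R) j k * Δ j k := by
  simp only [Matrix.mul_apply, Matrix.transpose_apply, Finset.mul_sum, Finset.sum_mul]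
  rw [Finset.sum_comm, Finset.sum_comm (s := (Finset.univ : Finset J))]
  refine Finset.sum_congr rfl fun k _ => ?_
  rw [Finset.sum_comm]
  exact Finset.sum_congr rfl fun j _ => Finset.sum_congr rfl fun n _ => by ring

/-- `f̃(B) = (1/2)‖Y − XB‖_F² + f_μ(B)` is differentiable at every `B`, with gradient
`Xᵀ(XB − Y) + S((BC)/μ) Cᵀ`. -/
theorem stmt_10 {N J K M : Type*} [Fintype N] [Fintype J] [Fintype K] [Fintype M]
    [Nonempty N] [Nonempty J] [Nonempty K] [Nonempty M]
    (X : Matrix N J ℝ) (Y : Matrix N K ℝ) (C : Matrix K M ℝ)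
    (μ : ℝ) (hμ : 0 < μ) (B : Matrix J K ℝ) :
    ∃ L : Matrix J K ℝ →L[ℝ] ℝ,
      (∀ Δ : Matrix J K ℝ, L Δ = ∑ j, ∑ k,
        ((Xᵀ * (X * B - Y))
          + (Matrix.of fun j m => max (-1) (min 1 ((B * C) j m / μ))) * Cᵀ) j k * Δ j k) ∧
      HasFDerivAt (fun B' : Matrix J K ℝ =>
        1 / 2 * ∑ n, ∑ k, ((Y - X * B') n k) ^ 2
          + sSup {x : ℝ | ∃ A : Matrix J M ℝ, (∀ j m, |A j m| ≤ 1) ∧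
              x = (∑ j, ∑ m, A j m * (B' * C) j m) - μ / 2 * (∑ j, ∑ m, (A j m) ^ 2)})
        L B := by
  let P (n : N) (k : K) : Matrix J K ℝ →L[ℝ] ℝ := LinearMap.toContinuousLinearMap
    { toFun := fun Δ => (X * Δ) n k
      map_add' := fun Δ Δ' => by rw [Matrix.mul_add, Matrix.add_apply]
      map_smul' := fun c Δ => by rw [Matrix.mul_smul, Matrix.smul_apply]; rfl }
  let Q (j : J) (m : M) : Matrix J K ℝ →L[ℝ] ℝ := LinearMap.toContinuousLinearMap
    { toFun := fun Δ => (Δ * C) j m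
      map_add' := fun Δ Δ' => by rw [Matrix.add_mul, Matrix.add_apply]
      map_smul' := fun c Δ => by rw [Matrix.smul_mul, Matrix.smul_apply]; rfl }
  refine ⟨(∑ n, ∑ k, (X * B - Y) n k • P n k)
    + ∑ j, ∑ m, shrink ((B * C) j m / μ) • Q j m, fun Δ => ?_, ?_⟩
  · have hC := sum_mul_mul_right (Matrix.of fun j m => shrink ((B * C) j m / μ)) C Δ
    have hX := sum_mul_mul_left (X * B - Y) X Δ
    simp only [Matrix.add_apply (Xᵀ * (X * B - Y)), add_mul, Finset.sum_add_distrib]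
    refine Eq.trans ?_ (congrArg₂ (· + ·) hX hC)
    simp only [_root_.add_apply, _root_.sum_apply, _root_.smul_apply, smul_eq_mul]
    rfl
  · simp only [sSup_eq_sum_scalarSmooth hμ]
    simp only [Finset.mul_sum]
    refine HasFDerivAt.add ?_ ?_
    · refine HasFDerivAt.fun_sum fun n _ => HasFDerivAt.fun_sum fun k _ => ?_
      have hsq : HasDerivAt (fun u : ℝ => 1 / 2 * (Y n k - u) ^ 2) ((X * B - Y) n k)
          ((X * B) n k) := by
        refine ((((hasDerivAt_id ((X * B) n k)).const_sub (Y n k)).pow 2).const_mul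
          (1 / 2 : ℝ)).congr_deriv ?_
        simp only [Matrix.sub_apply, id]
        ring
      exact HasDerivAt.comp_hasFDerivAt (f := P n k) B hsq (P n k).hasFDerivAt
    · exact HasFDerivAt.fun_sum fun j _ => HasFDerivAt.fun_sum fun m _ =>
        (hasDerivAt_scalarSmooth hμ _).comp_hasFDerivAt B (Q j m).hasFDerivAt
end

section
/- Fix matrices X ∈ ℝ^{N×J}, Y ∈ ℝ^{N×K}, C ∈ ℝ^{K×M} and μ > 0. Suppose c₁ ≥ 0 satisfies ‖Xᵀ X v‖₂ ≤ c₁ ‖v‖₂ for all v ∈ ℝ^J, and c₂ ≥ 0 satisfies ‖B C‖_F ≤ c₂ ‖B‖_F for all B ∈ ℝ^{J×K}. Then the map B ↦ Xᵀ(X B − Y) + S((B C)/μ) Cᵀ (the gradient of f̃(B) = (1/2)‖Y − XB‖_F² + f_μ(B)) is Lipschitz continuous in the Frobenius norm with Lipschitz constant c₁ + c₂²/μ. -/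
open Finset Matrix

/-!
The difference of the two gradients splits as `(XᵀX) D + (S₁ - S₂) Cᵀ`, where `D = B₁ - B₂` and
`Sᵢ` is the shrinkage of `Bᵢ C / μ`. The first term is bounded by `c₁ ‖D‖` column by column
(`frob_mul_left_le`). The shrinkage operator is nonexpansive, so `‖S₁ - S₂‖ ≤ ‖D C‖ / μ`, which is
at most `c₂ ‖D‖ / μ`. Right multiplication by `Cᵀ` is the Frobenius adjoint of right multiplication
by `C`, so it obeys the same bound `c₂` (`frob_mul_transpose_le`), which supplies the second factor
`c₂`.
-/

/-- The Frobenius norm, written as an explicit square root so that it unfolds to the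
expression in the theorem. -/
noncomputable def frob {I L : Type*} [Fintype I] [Fintype L] (A : Matrix I L ℝ) : ℝ :=
  Real.sqrt (∑ i, ∑ l, A i l ^ 2)

section
variable {I J K L M : Type*} [Fintype I] [Fintype J] [Fintype K] [Fintype L] [Fintype M]

lemma frob_nonneg (A : Matrix I L ℝ) : 0 ≤ frob A := Real.sqrt_nonneg _

lemma frob_sq (A : Matrix I L ℝ) : frob A ^ 2 = ∑ i, ∑ l, A i l ^ 2 :=
  Real.sq_sqrt (by positivity)

open scoped Matrix.Norms.Frobenius in
lemma frob_add_le (A B : Matrix I L ℝ) : frob (A + B) ≤ frob A + frob B := by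
  have h : ∀ A : Matrix I L ℝ, frob A = ‖A‖ := fun A => by
    simp [frob, Matrix.frobenius_norm_def, Real.sqrt_eq_rpow]
  simpa only [h] using norm_add_le A B

/-- Cauchy–Schwarz for the Frobenius inner product. -/
lemma sum_mul_le_frob (A B : Matrix I L ℝ) : ∑ i, ∑ l, A i l * B i l ≤ frob A * frob B := by
  have h := Real.sum_mul_le_sqrt_mul_sqrt (univ : Finset (I × L))
    (fun p => A p.1 p.2) (fun p => B p.1 p.2)
  simpa only [Fintype.sum_prod_type, frob] using h

/-- `D ↦ D Cᵀ` and `B ↦ B C` are adjoint for the Frobenius inner product. -/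
lemma sum_mul_transpose_mul (D : Matrix J M ℝ) (B : Matrix J K ℝ) (C : Matrix K M ℝ) :
    ∑ j, ∑ k, (D * Cᵀ) j k * B j k = ∑ j, ∑ m, D j m * (B * C) j m := by
  refine sum_congr rfl fun j _ => ?_
  simp only [mul_apply, transpose_apply, sum_mul, mul_sum]
  rw [sum_comm]
  exact sum_congr rfl fun m _ => sum_congr rfl fun k _ => by ring

/-- The adjoint map `D ↦ D Cᵀ` inherits any bound satisfied by `B ↦ B C`. -/
lemma frob_mul_transpose_le (C : Matrix K M ℝ) (c : ℝ) (hc : 0 ≤ c)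
    (hC : ∀ B : Matrix J K ℝ, frob (B * C) ≤ c * frob B) (D : Matrix J M ℝ) :
    frob (D * Cᵀ) ≤ c * frob D := by
  have h : frob (D * Cᵀ) ^ 2 ≤ frob D * (c * frob (D * Cᵀ)) := by
    calc frob (D * Cᵀ) ^ 2 = ∑ j, ∑ k, (D * Cᵀ) j k * (D * Cᵀ) j k := by
          rw [frob_sq]; simp only [pow_two]
      _ = ∑ j, ∑ m, D j m * (D * Cᵀ * C) j m := sum_mul_transpose_mul D _ C
      _ ≤ frob D * frob (D * Cᵀ * C) := sum_mul_le_frob _ _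
      _ ≤ _ := mul_le_mul_of_nonneg_left (hC _) (frob_nonneg _)
  rcases (frob_nonneg (D * Cᵀ)).eq_or_lt with h0 | h0
  · rw [← h0]; exact mul_nonneg hc (frob_nonneg _)
  · exact le_of_mul_le_mul_right (by linarith) h0

/-- A bound for a matrix acting on vectors passes to left multiplication, since the squared
Frobenius norm is the sum of the squared norms of the columns. -/
lemma frob_mul_left_le (A : Matrix J J ℝ) (c : ℝ) (hc : 0 ≤ c)
    (hA : ∀ v : J → ℝ,
      Real.sqrt (∑ j, (A *ᵥ v) j ^ 2) ≤ c * Real.sqrt (∑ j, (v j) ^ 2))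
    (D : Matrix J K ℝ) : frob (A * D) ≤ c * frob D := by
  have hcol : ∀ k, ∑ j, (A * D) j k ^ 2 ≤ c ^ 2 * ∑ j, D j k ^ 2 := fun k => by
    have h := pow_le_pow_left₀ (Real.sqrt_nonneg _) (hA fun j => D j k) 2
    rw [mul_pow, Real.sq_sqrt (by positivity), Real.sq_sqrt (by positivity)] at h
    exact h
  refine (sq_le_sq₀ (frob_nonneg _) (mul_nonneg hc (frob_nonneg _))).1 ?_
  rw [mul_pow, frob_sq, frob_sq, sum_comm, sum_comm (f := fun j k => D j k ^ 2), mul_sum]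
  exact sum_le_sum fun k _ => hcol k

lemma frob_le_of_abs_le (A B : Matrix I L ℝ) (c : ℝ) (hc : 0 ≤ c)
    (h : ∀ i l, |A i l| ≤ c * |B i l|) : frob A ≤ c * frob B := by
  refine (sq_le_sq₀ (frob_nonneg _) (mul_nonneg hc (frob_nonneg _))).1 ?_
  rw [mul_pow, frob_sq, frob_sq, mul_sum]
  refine sum_le_sum fun i _ => ?_
  rw [mul_sum]
  refine sum_le_sum fun l _ => ?_
  have := pow_le_pow_left₀ (abs_nonneg _) (h i l) 2
  rwa [mul_pow, sq_abs, sq_abs] at this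

end

/-- The shrinkage operator is nonexpansive. -/
lemma abs_shrink_sub_le (x y : ℝ) :
    |max (-1) (min 1 x) - max (-1) (min 1 y)| ≤ |x - y| :=
  (abs_max_sub_max_le_max (-1) (min 1 x) (-1) (min 1 y)).trans (by
    simpa using abs_min_sub_min_le_max (1 : ℝ) x 1 y)

/-- The gradient map `B ↦ Xᵀ(XB − Y) + S((BC)/μ) Cᵀ` of `f̃` is Lipschitz with
constant `c₁ + c₂²/μ` in the Frobenius norm, where `‖XᵀXv‖₂ ≤ c₁‖v‖₂` and
`‖BC‖_F ≤ c₂‖B‖_F`. -/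
theorem stmt_11 {N J K M : Type*} [Fintype N] [Fintype J] [Fintype K] [Fintype M]
    [Nonempty N] [Nonempty J] [Nonempty K] [Nonempty M]
    (X : Matrix N J ℝ) (Y : Matrix N K ℝ) (C : Matrix K M ℝ)
    (μ : ℝ) (hμ : 0 < μ)
    (c₁ : ℝ) (hc₁ : 0 ≤ c₁)
    (hX : ∀ v : J → ℝ,
      Real.sqrt (∑ j, ((Xᵀ * X) *ᵥ v) j ^ 2) ≤ c₁ * Real.sqrt (∑ j, (v j) ^ 2))
    (c₂ : ℝ) (hc₂ : 0 ≤ c₂)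
    (hC : ∀ B : Matrix J K ℝ,
      Real.sqrt (∑ j, ∑ m, ((B * C) j m) ^ 2) ≤ c₂ * Real.sqrt (∑ j, ∑ k, (B j k) ^ 2)) :
    ∀ B₁ B₂ : Matrix J K ℝ,
      Real.sqrt (∑ j, ∑ k,
        (((Xᵀ * (X * B₁ - Y))
            + (Matrix.of fun j m => max (-1) (min 1 ((B₁ * C) j m / μ))) * Cᵀ) j k
          - ((Xᵀ * (X * B₂ - Y))
            + (Matrix.of fun j m => max (-1) (min 1 ((B₂ * C) j m / μ))) * Cᵀ) j k) ^ 2)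
        ≤ (c₁ + c₂ ^ 2 / μ) * Real.sqrt (∑ j, ∑ k, (B₁ j k - B₂ j k) ^ 2) := by
  intro B₁ B₂
  set S₁ : Matrix J M ℝ := Matrix.of fun j m => max (-1) (min 1 ((B₁ * C) j m / μ)) with hS₁
  set S₂ : Matrix J M ℝ := Matrix.of fun j m => max (-1) (min 1 ((B₂ * C) j m / μ)) with hS₂
  change frob ((Xᵀ * (X * B₁ - Y) + S₁ * Cᵀ) - (Xᵀ * (X * B₂ - Y) + S₂ * Cᵀ))
    ≤ (c₁ + c₂ ^ 2 / μ) * frob (B₁ - B₂)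
  have hsplit : (Xᵀ * (X * B₁ - Y) + S₁ * Cᵀ) - (Xᵀ * (X * B₂ - Y) + S₂ * Cᵀ)
      = (Xᵀ * X) * (B₁ - B₂) + (S₁ - S₂) * Cᵀ := by
    simp only [Matrix.mul_sub, Matrix.sub_mul, Matrix.mul_assoc]
    abel
  have hS : frob (S₁ - S₂) ≤ μ⁻¹ * frob ((B₁ - B₂) * C) := by
    refine frob_le_of_abs_le _ _ _ (inv_nonneg.2 hμ.le) fun j m => ?_
    refine (abs_shrink_sub_le _ _).trans_eq ?_
    rw [Matrix.sub_mul, Matrix.sub_apply, ← sub_div, abs_div, abs_of_pos hμ, div_eq_inv_mul]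
  rw [hsplit]
  calc frob ((Xᵀ * X) * (B₁ - B₂) + (S₁ - S₂) * Cᵀ)
      ≤ frob ((Xᵀ * X) * (B₁ - B₂)) + frob ((S₁ - S₂) * Cᵀ) := frob_add_le _ _
    _ ≤ c₁ * frob (B₁ - B₂) + c₂ * (μ⁻¹ * (c₂ * frob (B₁ - B₂))) := by
        refine add_le_add (frob_mul_left_le _ c₁ hc₁ hX _)
          ((frob_mul_transpose_le C c₂ hc₂ hC _).trans ?_)
        have := hC (B₁ - B₂)
        refine mul_le_mul_of_nonneg_left (hS.trans ?_) hc₂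
        exact mul_le_mul_of_nonneg_left this (inv_nonneg.2 hμ.le)
    _ = (c₁ + c₂ ^ 2 / μ) * frob (B₁ - B₂) := by ring
end
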